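/- arXiv:1807.03981 — 3 statements merged into one kernel-verified Lean document; each statement's English description precedes it below -/
import Mathlib

section
/- Let (X,Y) be a bivariate normal random vector with zero mean vector, variances (σ_X², σ_Y²) with σ_X > 0, σ_Y > 0, and correlation coefficient ρ ∈ (−1,1). Then the product Z = XY has a probability density function (with respect to Lebesgue measure) given by f_Z(x) = (1/(π σ_X σ_Y √(1−ρ²))) · exp(ρx/(σ_X σ_Y (1−ρ²))) · K₀(|x|/(σ_X σ_Y (1−ρ²))) for all real x. -/
/-! The event `XY ∈ A` is integrated over the plane with respect to the bivariate density `p`. For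
fixed `x ≠ 0` the substitution `y = z / x` followed by Tonelli shows that `XY` has density
`z ↦ ∫ |x|⁻¹ p(x, z / x) dx` (`lintegral_mul_mem`). For `z ≠ 0` the integrand is even in `x`, and the
substitution `x = √(|z| σX / σY) · exp (t / 2)` turns `x² / σX² + z² / (σY² x²)` into
`2 |z| / (σX σY) · cosh t` and `dx / x` into `dt / 2`, so that the integral over `x > 0` becomes the
integral defining `K₀` (`lintegral_slice`). The point `z = 0` is a null set. -/

open MeasureTheory ProbabilityTheory

/-- The modified Bessel function of the second kind `K_ν(x)`, for `x > 0` given by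
`K_ν(x) = ∫₀^∞ exp(−x cosh t) cosh(ν t) dt`. -/
noncomputable def besselK (ν x : ℝ) : ℝ :=
  ∫ t in Set.Ioi (0 : ℝ), Real.exp (-x * Real.cosh t) * Real.cosh (ν * t)

/-- The density of the centered bivariate Gaussian measure on `ℝ²` with covariance matrix
`[[σX², ρσXσY], [ρσXσY, σY²]]` (for `σX, σY > 0` and `ρ ∈ (−1,1)`). -/
noncomputable def binormalPDF (sx sy ρ : ℝ) (p : ℝ × ℝ) : ℝ :=
  (1 / (2 * Real.pi * sx * sy * Real.sqrt (1 - ρ ^ 2))) *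
    Real.exp (-(p.1 ^ 2 / sx ^ 2 - 2 * ρ * p.1 * p.2 / (sx * sy) + p.2 ^ 2 / sy ^ 2) /
      (2 * (1 - ρ ^ 2)))

/-- An even function on the line integrates to twice its integral over the positive half-line. -/
lemma lintegral_even (g : ℝ → ENNReal) (hg : ∀ x, g (-x) = g x) :
    ∫⁻ x, g x = 2 * ∫⁻ x in Set.Ioi (0 : ℝ), g x := by
  have h1 : ∫⁻ x in Set.Iio (0 : ℝ), g x = ∫⁻ x in Set.Ioi (0 : ℝ), g x := by
    have := lintegral_image_eq_lintegral_abs_deriv_mul (s := Set.Ioi (0 : ℝ)) (f := fun x => -x)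
      (f' := fun _ => -1) measurableSet_Ioi (fun x _ => (hasDerivAt_neg x).hasDerivWithinAt)
      neg_injective.injOn g
    simpa [hg] using this
  rw [← lintegral_add_compl g (measurableSet_Ioi (a := (0 : ℝ))), Set.compl_Ioi,
    setLIntegral_congr (Iio_ae_eq_Iic (a := (0 : ℝ))).symm, h1, two_mul]

/-- The substitution `y = z / x` for fixed `x ≠ 0`. -/
lemma lintegral_div_subst (g : ℝ → ENNReal) {x : ℝ} (hx : x ≠ 0) :
    ∫⁻ y, g y = ∫⁻ z, ENNReal.ofReal |x⁻¹| * g (z / x) := by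
  have := lintegral_image_eq_lintegral_abs_deriv_mul (s := Set.univ) (f := fun z => z / x)
      (f' := fun _ => x⁻¹) MeasurableSet.univ
      (fun z _ => by simpa using (hasDerivAt_id z).div_const x)
      (fun a _ b _ hab => by simpa [hx] using hab) g
  have hs : Set.range (fun z => z / x) = Set.univ :=
    Set.range_eq_univ.2 fun y => ⟨y * x, by field_simp⟩
  simpa [Set.image_univ, hs] using this

/-- The logarithmic substitution `x = c * exp (t / 2)`, under which `dx / x = dt / 2`. -/
lemma lintegral_exp_subst (g : ℝ → ENNReal) {c : ℝ} (hc : 0 < c) :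
    ∫⁻ x in Set.Ioi (0 : ℝ), g x =
      ∫⁻ t, ENNReal.ofReal (c * Real.exp (t / 2) / 2) * g (c * Real.exp (t / 2)) := by
  have := lintegral_image_eq_lintegral_abs_deriv_mul (s := Set.univ)
      (f := fun t => c * Real.exp (t / 2))
      (f' := fun t => c * (Real.exp (t / 2) * (1 / 2))) MeasurableSet.univ
      (fun t _ => ((((hasDerivAt_id t).div_const 2).exp).const_mul c).hasDerivWithinAt)
      (fun a _ b _ hab => by simpa [hc.ne'] using hab) g
  have hs : Set.range (fun t => c * Real.exp (t / 2)) = Set.Ioi 0 := by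
    ext y
    constructor
    · rintro ⟨t, rfl⟩
      exact mul_pos hc (Real.exp_pos _)
    · intro hy
      refine ⟨2 * Real.log (y / c), ?_⟩
      have : 0 < y / c := div_pos hy hc
      simp only [mul_div_cancel_left₀ _ (two_ne_zero' ℝ), Real.exp_log this]
      field_simp
  rw [Set.image_univ, hs, setLIntegral_univ] at this
  rw [this]
  refine lintegral_congr fun t => ?_
  have : 0 < c * (Real.exp (t / 2) * (1 / 2)) := by positivity
  rw [abs_of_pos this]
  ring_nf

/-- The density of the product of two random variables with joint density `p`. -/
lemma lintegral_mul_mem (p : ℝ × ℝ → ENNReal) (hp : Measurable p) (A : Set ℝ)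
    (hA : MeasurableSet A) :
    ∫⁻ q in (fun q : ℝ × ℝ => q.1 * q.2) ⁻¹' A, p q =
      ∫⁻ z in A, ∫⁻ x, ENNReal.ofReal |x⁻¹| * p (x, z / x) := by
  have hm : MeasurableSet ((fun q : ℝ × ℝ => q.1 * q.2) ⁻¹' A) :=
    (measurable_fst.mul measurable_snd) hA
  rw [← lintegral_indicator hm, ← lintegral_indicator hA, Measure.volume_eq_prod,
    lintegral_prod _ (hp.indicator hm).aemeasurable]
  have h1 : ∀ᵐ x : ℝ, ∫⁻ y, ((fun q : ℝ × ℝ => q.1 * q.2) ⁻¹' A).indicator p (x, y) =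
      ∫⁻ z, A.indicator (fun z => ENNReal.ofReal |x⁻¹| * p (x, z / x)) z := by
    filter_upwards [Measure.ae_ne volume (0 : ℝ)] with x hx
    rw [lintegral_div_subst _ hx]
    refine lintegral_congr fun z => ?_
    have : x * (z / x) = z := by field_simp
    by_cases hz : z ∈ A <;> simp [Set.indicator, this, hz]
  rw [lintegral_congr_ae h1, lintegral_lintegral_swap]
  · refine lintegral_congr fun z => ?_
    by_cases hz : z ∈ A <;> simp [hz]
  · have : Measurable (fun q : ℝ × ℝ => (Prod.snd ⁻¹' A).indicator
        (fun q : ℝ × ℝ => ENNReal.ofReal |q.1⁻¹| * p (q.1, q.2 / q.1)) q) :=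
      Measurable.indicator (by fun_prop) (measurable_snd hA)
    exact this.aemeasurable

lemma integrableOn_exp_neg_cosh {a : ℝ} (ha : 0 < a) :
    IntegrableOn (fun t => Real.exp (-a * Real.cosh t)) (Set.Ioi (0 : ℝ)) := by
  have h := integrableOn_exp_mul_Ioi (a := -(a / 2)) (by linarith) 0
  refine h.mono' (by fun_prop) ?_
  filter_upwards [] with t
  rw [Real.norm_eq_abs, abs_of_pos (Real.exp_pos _)]
  refine Real.exp_le_exp.2 ?_
  have h1 : t / 2 ≤ Real.cosh t := by
    rw [Real.cosh_eq]
    linarith [Real.add_one_le_exp t, Real.exp_pos (-t)]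
  nlinarith

lemma lintegral_exp_neg_cosh {a : ℝ} (ha : 0 < a) :
    ∫⁻ t, ENNReal.ofReal (Real.exp (-a * Real.cosh t)) = 2 * ENNReal.ofReal (besselK 0 a) := by
  rw [lintegral_even _ (fun x => by rw [Real.cosh_neg]), besselK,
    ← ofReal_integral_eq_lintegral_ofReal (integrableOn_exp_neg_cosh ha)
      (Filter.Eventually.of_forall fun t => (Real.exp_pos _).le)]
  simp

/-- On the curve `xy = z`, in the logarithmic coordinate, the Gaussian exponent becomes a
hyperbolic cosine. -/
lemma binormalPDF_curve {sx sy ρ z : ℝ} (hsx : 0 < sx) (hsy : 0 < sy)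
    (hρ : 0 < 1 - ρ ^ 2) (hz : z ≠ 0) (t : ℝ) :
    binormalPDF sx sy ρ (Real.sqrt (|z| * sx / sy) * Real.exp (t / 2),
        z / (Real.sqrt (|z| * sx / sy) * Real.exp (t / 2))) =
      1 / (2 * Real.pi * sx * sy * Real.sqrt (1 - ρ ^ 2)) *
        Real.exp (ρ * z / (sx * sy * (1 - ρ ^ 2))) *
        Real.exp (-(|z| / (sx * sy * (1 - ρ ^ 2))) * Real.cosh t) := by
  have hz' : 0 < |z| := abs_pos.2 hz
  have hq : 0 < |z| * sx / sy := by positivity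
  have hs : 0 < Real.sqrt (|z| * sx / sy) := Real.sqrt_pos.2 hq
  have hs2 : Real.sqrt (|z| * sx / sy) ^ 2 = |z| * sx / sy := Real.sq_sqrt hq.le
  have he : 0 < Real.exp (t / 2) := Real.exp_pos _
  have he1 : Real.exp t = Real.exp (t / 2) ^ 2 := by
    rw [← Real.exp_nat_mul]; congr 1; push_cast; ring
  have he2 : Real.exp (-t) = (Real.exp (t / 2) ^ 2)⁻¹ := by rw [Real.exp_neg, he1]
  rw [binormalPDF, mul_assoc _ (Real.exp _) (Real.exp _), ← Real.exp_add, Real.cosh_eq, he1, he2]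
  congr 2
  generalize Real.sqrt (|z| * sx / sy) = s at *
  generalize Real.exp (t / 2) = e at *
  have hzz : z ^ 2 = |z| ^ 2 := (sq_abs z).symm
  have h1 : 2 * ρ * (s * e) * (z / (s * e)) = 2 * ρ * z := by field_simp
  simp only [h1, mul_pow, div_pow, hs2, hzz]
  field_simp
  ring

lemma lintegral_slice {sx sy ρ z : ℝ} (hsx : 0 < sx) (hsy : 0 < sy)
    (hρ : 0 < 1 - ρ ^ 2) (hz : z ≠ 0) :
    ∫⁻ x, ENNReal.ofReal |x⁻¹| * ENNReal.ofReal (binormalPDF sx sy ρ (x, z / x)) =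
      ENNReal.ofReal (1 / (Real.pi * sx * sy * Real.sqrt (1 - ρ ^ 2)) *
          Real.exp (ρ * z / (sx * sy * (1 - ρ ^ 2))) *
          besselK 0 (|z| / (sx * sy * (1 - ρ ^ 2)))) := by
  have hz' : 0 < |z| := abs_pos.2 hz
  have hc : 0 < Real.sqrt (|z| * sx / sy) := Real.sqrt_pos.2 (by positivity)
  have ha : 0 < |z| / (sx * sy * (1 - ρ ^ 2)) := by positivity
  have hr : 0 < Real.sqrt (1 - ρ ^ 2) := Real.sqrt_pos.2 hρ
  set C : ℝ := 1 / (2 * Real.pi * sx * sy * Real.sqrt (1 - ρ ^ 2)) *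
        Real.exp (ρ * z / (sx * sy * (1 - ρ ^ 2))) with hC
  have hC0 : 0 ≤ C := by positivity
  rw [lintegral_even, lintegral_exp_subst _ hc]
  · have h1 : ∀ t, ENNReal.ofReal (Real.sqrt (|z| * sx / sy) * Real.exp (t / 2) / 2) *
        (ENNReal.ofReal |(Real.sqrt (|z| * sx / sy) * Real.exp (t / 2))⁻¹| *
          ENNReal.ofReal (binormalPDF sx sy ρ (Real.sqrt (|z| * sx / sy) * Real.exp (t / 2),
            z / (Real.sqrt (|z| * sx / sy) * Real.exp (t / 2))))) =
        ENNReal.ofReal (C / 2) *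
          ENNReal.ofReal (Real.exp (-(|z| / (sx * sy * (1 - ρ ^ 2))) * Real.cosh t)) := by
      intro t
      rw [binormalPDF_curve hsx hsy hρ hz, ← hC]
      generalize Real.sqrt (|z| * sx / sy) = s at hc
      rw [abs_of_pos (a := (s * Real.exp (t / 2))⁻¹) (by positivity),
        ← ENNReal.ofReal_mul (by positivity), ← ENNReal.ofReal_mul (by positivity),
        ← ENNReal.ofReal_mul (by positivity)]
      congr 1
      field_simp
    simp only [h1]
    rw [lintegral_const_mul _ (by fun_prop), lintegral_exp_neg_cosh ha,
      ← ENNReal.ofReal_ofNat 2, ← ENNReal.ofReal_mul (by norm_num),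
      ← ENNReal.ofReal_mul (by positivity), ← ENNReal.ofReal_mul (by norm_num)]
    congr 1
    rw [hC]
    field_simp
  · intro x
    simp only [binormalPDF, inv_neg, abs_neg, div_neg]
    ring_nf

/-- If `(X,Y)` is a centered bivariate normal random vector with variances `(σX², σY²)` and
correlation `ρ ∈ (−1,1)`, then `Z = XY` has probability density function
`f_Z(x) = (1/(π σX σY √(1−ρ²))) exp(ρx/(σX σY (1−ρ²))) K₀(|x|/(σX σY (1−ρ²)))`. -/
theorem product_bivariate_normal_pdf
    {Ω : Type*} [MeasurableSpace Ω] (μ : Measure Ω) [IsProbabilityMeasure μ]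
    (X Y : Ω → ℝ) (hX : Measurable X) (hY : Measurable Y)
    (sx sy ρ : ℝ) (hsx : 0 < sx) (hsy : 0 < sy) (hρ : ρ ∈ Set.Ioo (-1 : ℝ) 1)
    (h : Measure.map (fun ω => (X ω, Y ω)) μ =
      (volume : Measure (ℝ × ℝ)).withDensity
        (fun p => ENNReal.ofReal (binormalPDF sx sy ρ p))) :
    Measure.map (fun ω => X ω * Y ω) μ =
      (volume : Measure ℝ).withDensity (fun x => ENNReal.ofReal
        (1 / (Real.pi * sx * sy * Real.sqrt (1 - ρ ^ 2)) *
          Real.exp (ρ * x / (sx * sy * (1 - ρ ^ 2))) *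
          besselK 0 (|x| / (sx * sy * (1 - ρ ^ 2))))) := by
  have hρ' : 0 < 1 - ρ ^ 2 := by nlinarith [hρ.1, hρ.2]
  have hp : Measurable fun q : ℝ × ℝ => ENNReal.ofReal (binormalPDF sx sy ρ q) := by
    unfold binormalPDF
    fun_prop
  have hmul : Measurable fun q : ℝ × ℝ => q.1 * q.2 := by fun_prop
  have hcomp : Measure.map (fun ω => X ω * Y ω) μ =
      Measure.map (fun q : ℝ × ℝ => q.1 * q.2) (Measure.map (fun ω => (X ω, Y ω)) μ) :=
    (Measure.map_map hmul (hX.prodMk hY)).symm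
  ext A hA
  rw [hcomp, h, Measure.map_apply hmul hA, withDensity_apply _ (hmul hA), withDensity_apply _ hA,
    lintegral_mul_mem _ hp A hA]
  refine lintegral_congr_ae (ae_restrict_of_ae ?_)
  filter_upwards [Measure.ae_ne volume (0 : ℝ)] with z hz
  exact lintegral_slice hsx hsy hρ' hz
end

section
/- Let r > 0, θ ∈ ℝ, σ > 0. Let S be a random variable with the Gamma distribution with shape parameter r/2 and rate parameter 1/2 (density (1/(2^{r/2}Γ(r/2))) x^{r/2−1}e^{−x/2} for x > 0), and let T be a standard normal random variable independent of S. Then the random variable θS + σ√S·T has probability density function f(x) = (1/(σ√π Γ(r/2))) · exp(θx/σ²) · (|x|/(2√(θ²+σ²)))^{(r−1)/2} · K_{(r−1)/2}(√(θ²+σ²)|x|/σ²) for all real x. -/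
/-! Conditionally on `S = s` the variable `θS + σ√S·T` is `N(θs, σ²s)`, so its law has density
`h(x) = ∫₀^∞ γ(s) φ_{θs, σ²s}(x) ds`, with `γ` the density of `S` (`map_eq_withDensity_mixture`).
Completing the exponents, the integrand is a constant times
`exp(θx/σ²) s^{ν-1} exp(-x²/(2σ²s) - (θ² + σ²)s/(2σ²))` with `ν = (r - 1)/2`. For `x ≠ 0` the
substitution `s = |x|/√(θ² + σ²) · eᵗ` turns the exponent into `-z cosh t` with
`z = √(θ² + σ²)|x|/σ²`, and folding the line at `t = 0` produces the integral defining `K_ν(z)`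
(`jointPDF_subst`, `lintegral_Ioi_eq_lintegral_fold`).

All integrals are taken in `[0, ∞]`. Convergence of the Bessel integral is needed only for almost
every `x`, and there it follows from `∫ h = 1`, which forces `h < ∞` almost everywhere. -/

open MeasureTheory ProbabilityTheory

/-- The density of the variance-gamma distribution `VG(r, θ, σ, 0)`. -/
noncomputable def vgPDF (r θ σ x : ℝ) : ℝ :=
  1 / (σ * Real.sqrt Real.pi * Real.Gamma (r / 2)) * Real.exp (θ * x / σ ^ 2) *
    (|x| / (2 * Real.sqrt (θ ^ 2 + σ ^ 2))) ^ ((r - 1) / 2) *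
    besselK ((r - 1) / 2) (Real.sqrt (θ ^ 2 + σ ^ 2) * |x| / σ ^ 2)

/-- The joint density of `(S, θS + σ√S·T)` at `(s, x)`, for `s > 0`: the gamma density of `S` times
the density of `N(θs, σ²s)`. -/
noncomputable def jointPDF (r θ σ s x : ℝ) : ℝ :=
  gammaPDFReal (r / 2) (1 / 2) s *
    ((Real.sqrt (2 * Real.pi * (σ ^ 2 * s)))⁻¹ *
      Real.exp (-(x - θ * s) ^ 2 / (2 * (σ ^ 2 * s))))

lemma measurable_jointPDF (r θ σ : ℝ) :
    Measurable (fun p : ℝ × ℝ => jointPDF r θ σ p.1 p.2) := by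
  have := measurable_gammaPDFReal (r / 2) (1 / 2)
  unfold jointPDF
  fun_prop

/-- The conditional law of `θS + σ√S·T` given `S = s` is `N(θs, σ²s)`. -/
lemma gaussian_affine_apply (θ σ s : ℝ) (hσ : 0 < σ) (hs : 0 < s) {A : Set ℝ}
    (hA : MeasurableSet A) :
    gaussianReal 0 1 ((fun t => θ * s + σ * Real.sqrt s * t) ⁻¹' A) =
      ∫⁻ x in A, ENNReal.ofReal ((Real.sqrt (2 * Real.pi * (σ ^ 2 * s)))⁻¹ *
        Real.exp (-(x - θ * s) ^ 2 / (2 * (σ ^ 2 * s)))) := by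
  have hmap : (gaussianReal 0 1).map (fun t => θ * s + σ * Real.sqrt s * t) =
      gaussianReal (θ * s) (Real.toNNReal (σ ^ 2 * s)) := by
    have h : (fun t => θ * s + σ * Real.sqrt s * t) =
        (fun y => θ * s + y) ∘ (fun t => σ * Real.sqrt s * t) := rfl
    rw [h, ← Measure.map_map (by fun_prop) (by fun_prop), gaussianReal_map_const_mul,
      gaussianReal_map_const_add]
    congr 1
    · ring
    · ext
      rw [Real.coe_toNNReal _ (by positivity)]
      simp [mul_pow, Real.sq_sqrt hs.le]
  rw [← Measure.map_apply (by fun_prop) hA, hmap, gaussianReal_apply]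
  · simp only [gaussianPDF, gaussianPDFReal, Real.coe_toNNReal _ (by positivity : 0 ≤ σ ^ 2 * s)]
  · simp only [ne_eq, Real.toNNReal_eq_zero, not_le]; positivity

/-- Integrating out `S` from the joint law. -/
lemma map_eq_withDensity_mixture
    {Ω : Type*} [MeasurableSpace Ω] (μ : Measure Ω) [IsProbabilityMeasure μ]
    (r θ σ : ℝ) (hr : 0 < r) (hσ : 0 < σ)
    (S T : Ω → ℝ) (hS : Measurable S) (hT : Measurable T)
    (hST : IndepFun S T μ)
    (hSlaw : Measure.map S μ = gammaMeasure (r / 2) (1 / 2))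
    (hTlaw : Measure.map T μ = gaussianReal 0 1) :
    Measure.map (fun ω => θ * S ω + σ * Real.sqrt (S ω) * T ω) μ =
      (volume : Measure ℝ).withDensity
        (fun x => ∫⁻ s in Set.Ioi (0 : ℝ), ENNReal.ofReal (jointPDF r θ σ s x)) := by
  have hprod := (indepFun_iff_map_prod_eq_prod_map_map hS.aemeasurable hT.aemeasurable).1 hST
  rw [hSlaw, hTlaw] at hprod
  have hF : Measurable (fun p : ℝ × ℝ => θ * p.1 + σ * Real.sqrt p.1 * p.2) := by fun_prop
  have hcomp : (fun ω => θ * S ω + σ * Real.sqrt (S ω) * T ω) =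
      (fun p : ℝ × ℝ => θ * p.1 + σ * Real.sqrt p.1 * p.2) ∘ (fun ω => (S ω, T ω)) := rfl
  have hJ : Measurable (fun p : ℝ × ℝ => ENNReal.ofReal (jointPDF r θ σ p.1 p.2)) :=
    (measurable_jointPDF r θ σ).ennreal_ofReal
  have : IsProbabilityMeasure (gammaMeasure (r / 2) (1 / 2)) :=
    isProbabilityMeasure_gammaMeasure (by positivity) (by positivity)
  rw [hcomp, ← Measure.map_map hF (hS.prodMk hT), hprod]
  ext A hA
  have hmeas : Measurable (fun s => gaussianReal 0 1
      (Prod.mk s ⁻¹' ((fun p : ℝ × ℝ => θ * p.1 + σ * Real.sqrt p.1 * p.2) ⁻¹' A))) :=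
    measurable_measure_prodMk_left (hF hA)
  rw [Measure.map_apply hF hA, Measure.prod_apply (hF hA), withDensity_apply _ hA,
    lintegral_lintegral_swap (f := fun x s => ENNReal.ofReal (jointPDF r θ σ s x))
      (hJ.comp measurable_swap).aemeasurable, gammaMeasure,
    lintegral_withDensity_eq_lintegral_mul (f := gammaPDF (r / 2) (1 / 2)) _
      (measurable_gammaPDFReal _ _).ennreal_ofReal hmeas,
    ← lintegral_add_compl _ (measurableSet_Ioi (a := (0 : ℝ)))]
  have hneg : ∫⁻ s in (Set.Ioi (0 : ℝ))ᶜ, (gammaPDF (r / 2) (1 / 2) * fun s => gaussianReal 0 1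
      (Prod.mk s ⁻¹' ((fun p : ℝ × ℝ => θ * p.1 + σ * Real.sqrt p.1 * p.2) ⁻¹' A))) s = 0 := by
    rw [Set.compl_Ioi, ← setLIntegral_congr Iio_ae_eq_Iic]
    rw [setLIntegral_congr_fun (g := fun _ => 0) measurableSet_Iio]
    · simp
    · intro s hs
      simp [gammaPDF_of_neg hs]
  rw [hneg, add_zero]
  refine setLIntegral_congr_fun measurableSet_Ioi fun s hs => ?_
  have hs : 0 < s := hs
  have hpre : (Prod.mk s ⁻¹' ((fun p : ℝ × ℝ => θ * p.1 + σ * Real.sqrt p.1 * p.2) ⁻¹' A)) =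
      (fun t => θ * s + σ * Real.sqrt s * t) ⁻¹' A := rfl
  simp only [Pi.mul_apply, hpre]
  rw [gaussian_affine_apply θ σ s hσ hs hA, ← lintegral_const_mul _ (by fun_prop)]
  refine lintegral_congr fun x => ?_
  rw [jointPDF, gammaPDF, ENNReal.ofReal_mul (gammaPDFReal_nonneg (by positivity) (by positivity) s)]

/-- The substitution `s = c eᵗ`, followed by folding the line onto the half-line. -/
lemma lintegral_Ioi_eq_lintegral_fold {c : ℝ} (hc : 0 < c) {g : ℝ → ℝ}
    (hg : Measurable g) (hg0 : ∀ s, 0 < s → 0 ≤ g s) :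
    ∫⁻ s in Set.Ioi (0 : ℝ), ENNReal.ofReal (g s) =
      ∫⁻ t in Set.Ioi (0 : ℝ), ENNReal.ofReal
        (c * Real.exp t * g (c * Real.exp t) + c * Real.exp (-t) * g (c * Real.exp (-t))) := by
  set k : ℝ → ENNReal := fun t => ENNReal.ofReal (c * Real.exp t * g (c * Real.exp t)) with hk
  have hkm : Measurable k := by fun_prop
  have himg : (fun t => c * Real.exp t) '' Set.univ = Set.Ioi (0 : ℝ) := by
    ext s
    constructor
    · rintro ⟨t, -, rfl⟩
      exact Set.mem_Ioi.2 (by positivity)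
    · intro hs
      have hs : 0 < s := hs
      refine ⟨Real.log (s / c), trivial, ?_⟩
      simp only [Real.exp_log (div_pos hs hc)]
      field_simp
  have hsub : ∫⁻ s in Set.Ioi (0 : ℝ), ENNReal.ofReal (g s) = ∫⁻ t, k t := by
    rw [← himg, lintegral_image_eq_lintegral_abs_deriv_mul MeasurableSet.univ
      (fun t _ => ((Real.hasDerivAt_exp t).const_mul c).hasDerivWithinAt)
      (fun a _ b _ hab => Real.exp_injective (mul_left_cancel₀ hc.ne' hab)),
      Measure.restrict_univ]
    refine lintegral_congr fun t => ?_
    rw [hk, ← ENNReal.ofReal_mul (abs_nonneg _), abs_of_pos (by positivity)]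
  have hrefl : ∫⁻ t in (Set.Ioi (0 : ℝ))ᶜ, k t = ∫⁻ t in Set.Ioi (0 : ℝ), k (-t) := by
    rw [Set.compl_Ioi, ← setLIntegral_congr Iio_ae_eq_Iic,
      ← (Measure.measurePreserving_neg (volume : Measure ℝ)).setLIntegral_comp_preimage
        measurableSet_Iio hkm]
    simp
  rw [hsub, ← lintegral_add_compl k (measurableSet_Ioi (a := (0 : ℝ))), hrefl,
    ← lintegral_add_left hkm]
  refine lintegral_congr fun t => ?_
  rw [hk, ENNReal.ofReal_add]
  · exact mul_nonneg (by positivity) (hg0 _ (by positivity))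
  · exact mul_nonneg (by positivity) (hg0 _ (by positivity))

/-- After the substitution `s = |x| / √(θ² + σ²) · eᵗ` the exponent becomes symmetric in `t` up to
the factor `exp (νt)`, where `ν = (r - 1) / 2`. -/
lemma jointPDF_subst (r θ σ x t : ℝ) (hσ : 0 < σ) (hx : x ≠ 0) :
    |x| / Real.sqrt (θ ^ 2 + σ ^ 2) * Real.exp t *
        jointPDF r θ σ (|x| / Real.sqrt (θ ^ 2 + σ ^ 2) * Real.exp t) x =
      1 / (σ * Real.sqrt Real.pi * Real.Gamma (r / 2)) * Real.exp (θ * x / σ ^ 2) *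
        (|x| / (2 * Real.sqrt (θ ^ 2 + σ ^ 2))) ^ ((r - 1) / 2) *
        (Real.exp (-(Real.sqrt (θ ^ 2 + σ ^ 2) * |x| / σ ^ 2) * Real.cosh t) *
          (Real.exp ((r - 1) / 2 * t) / 2)) := by
  have hx' : 0 < |x| := abs_pos.2 hx
  have hR : 0 < Real.sqrt (θ ^ 2 + σ ^ 2) := by positivity
  have hR2 : Real.sqrt (θ ^ 2 + σ ^ 2) ^ 2 = θ ^ 2 + σ ^ 2 := Real.sq_sqrt (by positivity)
  set R := Real.sqrt (θ ^ 2 + σ ^ 2)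
  set s := |x| / R * Real.exp t with hs
  have hs0 : 0 < s := by positivity
  have hexp : Real.exp (-(1 / 2 * s)) * Real.exp (-(x - θ * s) ^ 2 / (2 * (σ ^ 2 * s))) =
      Real.exp (θ * x / σ ^ 2) * Real.exp (-(R * |x| / σ ^ 2) * Real.cosh t) := by
    rw [← Real.exp_add, ← Real.exp_add]
    congr 1
    have h1 : R * |x| * Real.cosh t = (x ^ 2 / s + R ^ 2 * s) / 2 := by
      rw [Real.cosh_eq, Real.exp_neg, hs, ← sq_abs x]
      field_simp
      ring
    have h2 : -(R * |x| / σ ^ 2) * Real.cosh t = -((x ^ 2 / s + R ^ 2 * s) / 2) / σ ^ 2 := by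
      rw [← h1]; ring
    rw [h2, hR2]
    field_simp
    ring
  have hpow : s * s ^ (r / 2 - 1) * (Real.sqrt s)⁻¹ =
      (|x| / R) ^ ((r - 1) / 2) * Real.exp ((r - 1) / 2 * t) := by
    have h1 : s * s ^ (r / 2 - 1) * (Real.sqrt s)⁻¹ = s ^ ((r - 1) / 2) := by
      conv_lhs => enter [1, 1]; rw [← Real.rpow_one s]
      rw [Real.sqrt_eq_rpow, ← Real.rpow_neg hs0.le, ← Real.rpow_add hs0, ← Real.rpow_add hs0]
      congr 1
      ring
    rw [h1, hs, Real.mul_rpow (by positivity) (Real.exp_pos t).le, ← Real.exp_mul, mul_comm t]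
  have htwo : (1 / 2 : ℝ) ^ (r / 2) * (Real.sqrt 2)⁻¹ = (1 / 2) ^ ((r - 1) / 2) / 2 := by
    rw [Real.sqrt_eq_rpow, ← Real.inv_rpow (by norm_num), ← one_div, ← Real.rpow_add (by norm_num)]
    rw [show r / 2 + 1 / 2 = (r - 1) / 2 + 1 by ring, Real.rpow_add_one (by norm_num)]
    ring
  have hsqrt : Real.sqrt (2 * Real.pi * (σ ^ 2 * s)) =
      Real.sqrt 2 * Real.sqrt Real.pi * (σ * Real.sqrt s) := by
    rw [Real.sqrt_mul (by positivity), Real.sqrt_mul (by positivity), Real.sqrt_mul (by positivity),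
      Real.sqrt_sq hσ.le]
  have hsplit : (|x| / (2 * R)) ^ ((r - 1) / 2) =
      (1 / 2) ^ ((r - 1) / 2) * (|x| / R) ^ ((r - 1) / 2) := by
    rw [← Real.mul_rpow (by norm_num) (by positivity)]
    congr 1
    field_simp
  rw [jointPDF, gammaPDFReal, if_pos hs0.le, hsqrt, hsplit]
  calc _ = 1 / (σ * Real.sqrt Real.pi * Real.Gamma (r / 2)) *
        ((1 / 2 : ℝ) ^ (r / 2) * (Real.sqrt 2)⁻¹) * (s * s ^ (r / 2 - 1) * (Real.sqrt s)⁻¹) *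
        (Real.exp (-(1 / 2 * s)) * Real.exp (-(x - θ * s) ^ 2 / (2 * (σ ^ 2 * s)))) := by
        simp only [mul_inv, div_eq_mul_inv]; ring
    _ = _ := by rw [htwo, hpow, hexp]; ring

/-- The mixture density agrees with the variance-gamma density wherever it is finite; finiteness
supplies the integrability of the Bessel integrand. -/
lemma lintegral_jointPDF_eq (r θ σ x : ℝ) (hr : 0 < r) (hσ : 0 < σ) (hx : x ≠ 0)
    (hfin : ∫⁻ s in Set.Ioi (0 : ℝ), ENNReal.ofReal (jointPDF r θ σ s x) < ⊤) :
    ∫⁻ s in Set.Ioi (0 : ℝ), ENNReal.ofReal (jointPDF r θ σ s x) =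
      ENNReal.ofReal (vgPDF r θ σ x) := by
  have hc : 0 < |x| / Real.sqrt (θ ^ 2 + σ ^ 2) := by positivity
  have hΓ : 0 < Real.Gamma (r / 2) := Real.Gamma_pos_of_pos (by positivity)
  have hgm : Measurable (fun s => jointPDF r θ σ s x) :=
    (measurable_jointPDF r θ σ).comp (measurable_id.prodMk measurable_const)
  have hg0 : ∀ s, 0 < s → 0 ≤ jointPDF r θ σ s x := fun s _ =>
    mul_nonneg (gammaPDFReal_nonneg (by positivity) (by positivity) s) (by positivity)
  have hfold := lintegral_Ioi_eq_lintegral_fold hc hgm hg0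
  simp only [jointPDF_subst r θ σ x _ hσ hx] at hfold
  have hcongr : ∀ t : ℝ,
      1 / (σ * Real.sqrt Real.pi * Real.Gamma (r / 2)) * Real.exp (θ * x / σ ^ 2) *
          (|x| / (2 * Real.sqrt (θ ^ 2 + σ ^ 2))) ^ ((r - 1) / 2) *
          (Real.exp (-(Real.sqrt (θ ^ 2 + σ ^ 2) * |x| / σ ^ 2) * Real.cosh t) *
            (Real.exp ((r - 1) / 2 * t) / 2)) +
        1 / (σ * Real.sqrt Real.pi * Real.Gamma (r / 2)) * Real.exp (θ * x / σ ^ 2) *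
          (|x| / (2 * Real.sqrt (θ ^ 2 + σ ^ 2))) ^ ((r - 1) / 2) *
          (Real.exp (-(Real.sqrt (θ ^ 2 + σ ^ 2) * |x| / σ ^ 2) * Real.cosh (-t)) *
            (Real.exp ((r - 1) / 2 * -t) / 2)) =
      1 / (σ * Real.sqrt Real.pi * Real.Gamma (r / 2)) * Real.exp (θ * x / σ ^ 2) *
        (|x| / (2 * Real.sqrt (θ ^ 2 + σ ^ 2))) ^ ((r - 1) / 2) *
        (Real.exp (-(Real.sqrt (θ ^ 2 + σ ^ 2) * |x| / σ ^ 2) * Real.cosh t) *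
          Real.cosh ((r - 1) / 2 * t)) := by
    intro t
    rw [Real.cosh_neg, Real.cosh_eq ((r - 1) / 2 * t), mul_neg]
    ring
  simp only [hcongr] at hfold
  rw [hfold] at hfin ⊢
  rw [vgPDF, besselK, ← integral_const_mul, integral_eq_lintegral_of_nonneg_ae
    (Filter.Eventually.of_forall fun t => ?_) (Measurable.aestronglyMeasurable (by fun_prop)),
    ENNReal.ofReal_toReal hfin.ne]
  have := Real.cosh_pos ((r - 1) / 2 * t)
  simp only [Pi.zero_apply]
  positivity

/-- If `S ~ Γ(r/2, 1/2)` and `T ~ N(0,1)` are independent, then `θS + σ√S·T` has the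
variance-gamma density `f` with parameters `(r, θ, σ, 0)`. -/
theorem gamma_normal_mixture_pdf
    {Ω : Type*} [MeasurableSpace Ω] (μ : Measure Ω) [IsProbabilityMeasure μ]
    (r θ σ : ℝ) (hr : 0 < r) (hσ : 0 < σ)
    (S T : Ω → ℝ) (hS : Measurable S) (hT : Measurable T)
    (hST : IndepFun S T μ)
    (hSlaw : Measure.map S μ = gammaMeasure (r / 2) (1 / 2))
    (hTlaw : Measure.map T μ = gaussianReal 0 1) :
    Measure.map (fun ω => θ * S ω + σ * Real.sqrt (S ω) * T ω) μ =
      (volume : Measure ℝ).withDensity (fun x => ENNReal.ofReal (vgPDF r θ σ x)) := by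
  set h : ℝ → ENNReal :=
    fun x => ∫⁻ s in Set.Ioi (0 : ℝ), ENNReal.ofReal (jointPDF r θ σ s x) with hh
  have hlaw := map_eq_withDensity_mixture μ r θ σ hr hσ S T hS hT hST hSlaw hTlaw
  have hhm : Measurable h :=
    ((measurable_jointPDF r θ σ).ennreal_ofReal.comp measurable_swap).lintegral_prod_right'
  have hmass : ∫⁻ x, h x = 1 := by
    rw [← setLIntegral_univ, ← withDensity_apply _ MeasurableSet.univ, hh, ← hlaw,
      Measure.map_apply (by fun_prop) MeasurableSet.univ, Set.preimage_univ, measure_univ]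
  rw [hlaw]
  refine withDensity_congr_ae ?_
  -- At `x = 0` the two densities may differ (the formula contains `0 ^ ν`), hence the exclusion.
  filter_upwards [ae_lt_top hhm (by rw [hmass]; exact ENNReal.one_ne_top),
    Measure.ae_ne volume (0 : ℝ)] with x hfin hx
  exact lintegral_jointPDF_eq r θ σ x hr hσ hx hfin
end

section
/- Let r₁, r₂ > 0, θ ∈ ℝ, σ > 0. Let W₁ and W₂ be independent random variables having the variance-gamma distributions VG(r₁, θ, σ, 0) and VG(r₂, θ, σ, 0) respectively (i.e., W₁ has density f with parameters (r₁, θ, σ, 0) and W₂ has density f with parameters (r₂, θ, σ, 0)). Then W₁ + W₂ has the variance-gamma distribution VG(r₁ + r₂, θ, σ, 0), i.e., W₁ + W₂ has probability density function f with parameters (r₁ + r₂, θ, σ, 0). -/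
/-!
The variance-gamma law `VG(r, θ, σ, 0)` is a normal mixture: it is the law of `θ S + σ √S Z` with
`S` gamma distributed (shape `r / 2`, rate `1 / 2`) and `Z` an independent standard normal. At the
level of densities this is `integral_vgKernel`: after the substitution
`s = |x| / √(θ² + σ²) * exp u`, the mixture integral becomes the integral of
`exp (ν u - z cosh u)` over the line, which is `2 K_ν(z)` with `ν = (r - 1) / 2`.

By Fubini, the characteristic function of `VG(r, θ, σ, 0)` at `t` is the complex moment generating
function of the gamma law of shape `r / 2` at `i t θ - σ² t² / 2` (`charFun_vg`), a point with
nonpositive real part. That function is multiplicative in the shape parameter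
(`complexMGF_gammaMeasure_mul`): on the reals below the rate it is an explicit power, and the
identity extends to the half-plane by analyticity. Hence the characteristic functions of the two
summands multiply to that of `VG(r₁ + r₂, θ, σ, 0)`, and characteristic functions determine finite
measures.
-/

open MeasureTheory ProbabilityTheory

open scoped Topology

/-! ### The Bessel function as an integral over the whole line -/

/-- Folding the line at `0` pairs `exp (ν u)` with `exp (-ν u)`, producing the `cosh (ν u)` in the
definition of `K_ν`. -/
lemma integral_exp_sub_cosh {ν z : ℝ}
    (h : Integrable (fun u : ℝ => Real.exp (ν * u - z * Real.cosh u))) :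
    ∫ u : ℝ, Real.exp (ν * u - z * Real.cosh u) = 2 * besselK ν z := by
  have hneg : ∫ u in Set.Iic (0 : ℝ), Real.exp (ν * u - z * Real.cosh u)
      = ∫ u in Set.Ioi (0 : ℝ), Real.exp (-(ν * u) - z * Real.cosh u) := by
    have := integral_comp_neg_Ioi (0 : ℝ) (fun u => Real.exp (ν * u - z * Real.cosh u))
    simpa using this.symm
  have hnegint : Integrable (fun u : ℝ => Real.exp (-(ν * u) - z * Real.cosh u)) := by
    simpa using h.comp_neg
  rw [← intervalIntegral.integral_Iic_add_Ioi h.integrableOn h.integrableOn (b := 0), hneg,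
    ← integral_add hnegint.integrableOn h.integrableOn, besselK, ← integral_const_mul]
  refine integral_congr_ae (ae_of_all _ fun u => ?_)
  simp only [Real.cosh_eq (ν * u), sub_eq_add_neg, Real.exp_add, neg_mul]
  ring

/-! ### The gamma distribution -/

lemma gammaMeasure_eq_restrict (a b : ℝ) :
    gammaMeasure a b = (volume.restrict (Set.Ioi 0)).withDensity (fun s => ENNReal.ofReal
      (b ^ a / Real.Gamma a * s ^ (a - 1) * Real.exp (-(b * s)))) := by
  rw [gammaMeasure, ← withDensity_indicator measurableSet_Ioi]
  refine withDensity_congr_ae ?_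
  filter_upwards [Measure.ae_ne volume (0 : ℝ)] with s hs
  rcases lt_or_gt_of_ne hs with h | h
  · rw [gammaPDF_of_neg h, Set.indicator_of_notMem (by simpa using h.le)]
  · rw [gammaPDF_of_nonneg h.le, Set.indicator_of_mem (by simpa using h)]

lemma gamma_ae_pos (a b : ℝ) : ∀ᵐ s ∂(gammaMeasure a b), 0 < s := by
  rw [gammaMeasure_eq_restrict]
  exact (withDensity_absolutelyContinuous _ _).ae_le (ae_restrict_mem measurableSet_Ioi)

lemma integral_gammaMeasure {E : Type*} [NormedAddCommGroup E] [NormedSpace ℝ E]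
    {a b : ℝ} (ha : 0 < a) (hb : 0 < b) (f : ℝ → E) :
    ∫ s, f s ∂(gammaMeasure a b) = ∫ s in Set.Ioi (0 : ℝ),
      (b ^ a / Real.Gamma a * s ^ (a - 1) * Real.exp (-(b * s))) • f s := by
  have hG := Real.Gamma_pos_of_pos ha
  rw [gammaMeasure_eq_restrict, integral_withDensity_eq_integral_toReal_smul₀
    (by fun_prop) (ae_of_all _ fun _ => ENNReal.ofReal_lt_top)]
  refine setIntegral_congr_fun measurableSet_Ioi fun s (hs : 0 < s) => ?_
  rw [ENNReal.toReal_ofReal (by positivity)]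

lemma integrable_gammaMeasure_iff {E : Type*} [NormedAddCommGroup E] [NormedSpace ℝ E]
    {a b : ℝ} (ha : 0 < a) (hb : 0 < b) (f : ℝ → E) :
    Integrable f (gammaMeasure a b) ↔ IntegrableOn (fun s =>
      (b ^ a / Real.Gamma a * s ^ (a - 1) * Real.exp (-(b * s))) • f s) (Set.Ioi 0) := by
  have hG := Real.Gamma_pos_of_pos ha
  rw [gammaMeasure_eq_restrict, integrable_withDensity_iff_integrable_smul₀'
    (by fun_prop) (ae_of_all _ fun _ => ENNReal.ofReal_lt_top)]
  refine integrableOn_congr_fun (fun s (hs : 0 < s) => ?_) measurableSet_Ioi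
  rw [ENNReal.toReal_ofReal (by positivity)]

lemma mgf_gammaMeasure {a b t : ℝ} (ha : 0 < a) (hb : 0 < b) (ht : t < b) :
    mgf id (gammaMeasure a b) t = (b / (b - t)) ^ a := by
  have hG := (Real.Gamma_pos_of_pos ha).ne'
  have hbt : 0 < b - t := sub_pos.2 ht
  rw [mgf, integral_gammaMeasure ha hb]
  have : ∀ s : ℝ, (b ^ a / Real.Gamma a * s ^ (a - 1) * Real.exp (-(b * s))) • Real.exp (t * id s)
      = b ^ a / Real.Gamma a * (s ^ (a - 1) * Real.exp (-((b - t) * s))) := fun s => by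
    rw [show -((b - t) * s) = -(b * s) + t * s by ring, Real.exp_add, smul_eq_mul, id]
    ring
  simp_rw [this]
  rw [integral_const_mul, Real.integral_rpow_mul_exp_neg_mul_Ioi ha hbt,
    Real.div_rpow hb.le hbt.le, Real.div_rpow zero_le_one hbt.le, Real.one_rpow]
  field_simp

/-- The exponential moment is finite for `t < b` because otherwise the Bochner integral defining
`mgf` would be `0`, whereas `mgf_gammaMeasure` gives a positive value. -/
lemma mem_interior_integrableExpSet_gammaMeasure {a b t : ℝ} (ha : 0 < a) (hb : 0 < b)
    (ht : t < b) : t ∈ interior (integrableExpSet id (gammaMeasure a b)) := by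
  refine interior_maximal (s := integrableExpSet id (gammaMeasure a b)) (t := Set.Iio b)
    (fun x (hx : x < b) => ?_) isOpen_Iio ht
  by_contra h
  have h0 : mgf id (gammaMeasure a b) x = 0 := integral_undef h
  have hbx : 0 < b - x := sub_pos.2 hx
  rw [mgf_gammaMeasure ha hb hx] at h0
  exact (Real.rpow_pos_of_pos (by positivity) a).ne' h0

/-- Gamma distributions of the same rate form a convolution semigroup, in terms of transforms. Both
sides are analytic in the half-plane `re z < b`, and on its real points they agree since
`mgf_gammaMeasure` is a power with exponent `a`. -/
lemma complexMGF_gammaMeasure_mul {a₁ a₂ b : ℝ} (h₁ : 0 < a₁) (h₂ : 0 < a₂) (hb : 0 < b)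
    {z : ℂ} (hz : z.re < b) :
    complexMGF id (gammaMeasure a₁ b) z * complexMGF id (gammaMeasure a₂ b) z =
      complexMGF id (gammaMeasure (a₁ + a₂) b) z := by
  have han : ∀ a, 0 < a → AnalyticOnNhd ℂ (complexMGF id (gammaMeasure a b)) {z | z.re < b} :=
    fun a ha z hz => analyticAt_complexMGF (mem_interior_integrableExpSet_gammaMeasure ha hb hz)
  refine AnalyticOnNhd.eqOn_of_preconnected_of_frequently_eq ((han a₁ h₁).mul (han a₂ h₂))
    (han _ (add_pos h₁ h₂)) (convex_halfSpace_re_lt b).isPreconnected (z₀ := 0)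
    (by simpa using hb) ?_ hz
  have hreal : ∀ᶠ t : ℝ in 𝓝[≠] 0, (complexMGF id (gammaMeasure a₁ b) *
      complexMGF id (gammaMeasure a₂ b)) t = complexMGF id (gammaMeasure (a₁ + a₂) b) t := by
    filter_upwards [nhdsWithin_le_nhds (Iio_mem_nhds hb)] with t ht
    have hbt : 0 < b - t := sub_pos.2 ht
    simp only [Pi.mul_apply, complexMGF_ofReal]
    rw [mgf_gammaMeasure h₁ hb ht, mgf_gammaMeasure h₂ hb ht,
      mgf_gammaMeasure (add_pos h₁ h₂) hb ht, Real.rpow_add (by positivity)]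
    push_cast
    rfl
  have htend : Filter.Tendsto (fun t : ℝ => (t : ℂ)) (𝓝[≠] 0) (𝓝[≠] 0) := by
    refine tendsto_nhdsWithin_iff.2 ⟨?_, ?_⟩
    · exact (Complex.continuous_ofReal.tendsto' 0 0 (by simp)).mono_left nhdsWithin_le_nhds
    · filter_upwards [self_mem_nhdsWithin] with t ht
      simpa using ht
  exact htend.frequently hreal.frequently

/-! ### The variance-gamma density as a normal mixture -/

/-- The density at `x` of the normal law with mean `θ s` and variance `σ² s`. Only the values at
`s > 0` matter; for `s ≤ 0` the variance is truncated to `0` and the value is `0`. -/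
noncomputable def vgKernel (θ σ s x : ℝ) : ℝ :=
  gaussianPDFReal (θ * s) (σ ^ 2 * s).toNNReal x

lemma integrable_vgKernel {a b : ℝ} (ha : 0 < a) (hb : 0 < b) (θ : ℝ) {σ : ℝ} (hσ : 0 < σ) :
    Integrable (Function.uncurry (vgKernel θ σ)) ((gammaMeasure a b).prod volume) := by
  have := isProbabilityMeasure_gammaMeasure ha hb
  have hmeas : Measurable (Function.uncurry (vgKernel θ σ)) := by
    unfold vgKernel gaussianPDFReal Function.uncurry
    fun_prop
  refine (integrable_prod_iff hmeas.aestronglyMeasurable).2 ⟨?_, ?_⟩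
  · exact ae_of_all _ fun s =>
      integrable_gaussianPDFReal (θ * s) (σ ^ 2 * s).toNNReal
  · refine (integrable_const (1 : ℝ)).congr ?_
    filter_upwards [gamma_ae_pos a b] with s hs
    have hv : (σ ^ 2 * s).toNNReal ≠ 0 := by
      rw [ne_eq, Real.toNNReal_eq_zero, not_le]; positivity
    simp only [Function.uncurry, vgKernel, Real.norm_eq_abs,
      abs_of_nonneg (gaussianPDFReal_nonneg _ _ _)]
    exact (integral_gaussianPDFReal_eq_one _ hv).symm

/-- The pointwise identity behind the substitution `s = |x| / √(θ² + σ²) * exp u`: gamma density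
times normal density times the Jacobian is the prefactor of `vgPDF` times half of the integrand
of `integral_exp_sub_cosh`. -/
lemma jacobian_mul_density_eq {r θ σ x : ℝ} (hr : 0 < r) (hσ : 0 < σ) (hx : x ≠ 0) (u : ℝ) :
    (|x| / √(θ ^ 2 + σ ^ 2) * Real.exp u) * (((1 / 2) ^ (r / 2) / Real.Gamma (r / 2) *
      (|x| / √(θ ^ 2 + σ ^ 2) * Real.exp u) ^ (r / 2 - 1) *
      Real.exp (-(1 / 2 * (|x| / √(θ ^ 2 + σ ^ 2) * Real.exp u)))) *
      vgKernel θ σ (|x| / √(θ ^ 2 + σ ^ 2) * Real.exp u) x) =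
    1 / 2 * (1 / (σ * √Real.pi * Real.Gamma (r / 2)) * Real.exp (θ * x / σ ^ 2) *
      (|x| / (2 * √(θ ^ 2 + σ ^ 2))) ^ ((r - 1) / 2)) *
      Real.exp ((r - 1) / 2 * u - (√(θ ^ 2 + σ ^ 2) * |x| / σ ^ 2) * Real.cosh u) := by
  have hG := Real.Gamma_pos_of_pos (half_pos hr)
  have hx' : 0 < |x| := abs_pos.2 hx
  set w := √(θ ^ 2 + σ ^ 2) with hw
  have hw0 : 0 < w := Real.sqrt_pos.2 (by positivity)
  have hw2 : w ^ 2 = θ ^ 2 + σ ^ 2 := Real.sq_sqrt (by positivity)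
  set s := |x| / w * Real.exp u with hs
  have hs0 : 0 < s := by positivity
  have hpow : s * ((1 / 2 : ℝ) ^ (r / 2) * s ^ (r / 2 - 1)) * (√(2 * Real.pi * (σ ^ 2 * s)))⁻¹ =
      1 / 2 * (1 / (σ * √Real.pi)) * ((|x| / (2 * w)) ^ ((r - 1) / 2) *
        Real.exp ((r - 1) / 2 * u)) := by
    have e1 : √(2 * Real.pi * (σ ^ 2 * s)) = σ * √Real.pi * (2 * s) ^ (1 / 2 : ℝ) := by
      rw [← Real.sqrt_eq_rpow, show 2 * Real.pi * (σ ^ 2 * s) = σ ^ 2 * (Real.pi * (2 * s)) by ring,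
        Real.sqrt_mul (by positivity), Real.sqrt_sq hσ.le, Real.sqrt_mul Real.pi_pos.le, mul_assoc]
    have e2 : (|x| / (2 * w)) ^ ((r - 1) / 2) * Real.exp ((r - 1) / 2 * u) =
        (s / 2) ^ ((r - 1) / 2) := by
      rw [mul_comm ((r - 1) / 2) u, Real.exp_mul, ← Real.mul_rpow (by positivity) (by positivity)]
      congr 1
      rw [hs]; field_simp
    have e3 : s * ((1 / 2 : ℝ) ^ (r / 2) * s ^ (r / 2 - 1)) = (s / 2) ^ (r / 2) := by
      rw [Real.rpow_sub_one hs0.ne', show s / 2 = 1 / 2 * s by ring,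
        Real.mul_rpow (by norm_num) hs0.le]
      field_simp
    have e4 : (s / 2) ^ (r / 2) = (s / 2) ^ ((r - 1) / 2) * (s / 2) ^ (1 / 2 : ℝ) := by
      rw [← Real.rpow_add (by positivity)]; congr 1; ring
    have e5 : (2 * s) ^ (1 / 2 : ℝ) = 2 * (s / 2) ^ (1 / 2 : ℝ) := by
      rw [← Real.sqrt_eq_rpow, ← Real.sqrt_eq_rpow, show 2 * s = 2 ^ 2 * (s / 2) by ring,
        Real.sqrt_mul (by positivity), Real.sqrt_sq (by positivity)]
    rw [e1, e2, e3, e4, e5]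
    have : 0 < (s / 2) ^ (1 / 2 : ℝ) := by positivity
    field_simp
  have hexp : Real.exp (-(1 / 2 * s)) * Real.exp (-(x - θ * s) ^ 2 / (2 * (σ ^ 2 * s))) =
      Real.exp (θ * x / σ ^ 2) * Real.exp (-(w * |x| / σ ^ 2 * Real.cosh u)) := by
    rw [← Real.exp_add, ← Real.exp_add]
    congr 1
    have hE : 0 < Real.exp u := Real.exp_pos u
    have hx2 : x ^ 2 = |x| ^ 2 := (sq_abs x).symm
    have hθ : θ ^ 2 = w ^ 2 - σ ^ 2 := by linarith
    -- completing the square separates the `θ x / σ²` term from a function symmetric under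
    -- `s ↦ |x|² / (w² s)`
    have key : -(1 / 2 * s) + -(x - θ * s) ^ 2 / (2 * (σ ^ 2 * s)) =
        θ * x / σ ^ 2 - (|x| ^ 2 / s + w ^ 2 * s) / (2 * σ ^ 2) := by
      rw [← hx2, hw2]; field_simp; ring
    rw [key, Real.cosh_eq, Real.exp_neg, hs]
    field_simp
    ring
  rw [vgKernel, gaussianPDFReal, Real.coe_toNNReal _ (by positivity), sub_eq_add_neg (_ * u),
    Real.exp_add]
  calc _ = (s * ((1 / 2 : ℝ) ^ (r / 2) * s ^ (r / 2 - 1)) * (√(2 * Real.pi * (σ ^ 2 * s)))⁻¹) *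
        (Real.exp (-(1 / 2 * s)) * Real.exp (-(x - θ * s) ^ 2 / (2 * (σ ^ 2 * s)))) /
          Real.Gamma (r / 2) := by ring
    _ = _ := by rw [hpow, hexp]; field_simp

/-- The variance-gamma density is the gamma mixture of normal densities. The point `x = 0` is
excluded because the substitution degenerates there. -/
lemma integral_vgKernel {r θ σ x : ℝ} (hr : 0 < r) (hσ : 0 < σ) (hx : x ≠ 0)
    (hint : Integrable (fun s => vgKernel θ σ s x) (gammaMeasure (r / 2) (1 / 2))) :
    ∫ s, vgKernel θ σ s x ∂(gammaMeasure (r / 2) (1 / 2)) = vgPDF r θ σ x := by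
  have hG := Real.Gamma_pos_of_pos (half_pos hr)
  have hk : 0 < |x| / √(θ ^ 2 + σ ^ 2) := div_pos (abs_pos.2 hx) (Real.sqrt_pos.2 (by positivity))
  have himg : (fun u => |x| / √(θ ^ 2 + σ ^ 2) * Real.exp u) '' Set.univ = Set.Ioi 0 := by
    ext s
    simp only [Set.image_univ, Set.mem_range, Set.mem_Ioi]
    constructor
    · rintro ⟨u, rfl⟩; positivity
    · intro hs
      refine ⟨Real.log (s / (|x| / √(θ ^ 2 + σ ^ 2))), ?_⟩
      rw [Real.exp_log (div_pos hs hk), mul_div_cancel₀ _ hk.ne']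
  have hinj : Set.InjOn (fun u => |x| / √(θ ^ 2 + σ ^ 2) * Real.exp u) Set.univ :=
    fun u _ v _ h => Real.exp_injective (mul_left_cancel₀ hk.ne' h)
  have hder : ∀ u ∈ Set.univ, HasDerivWithinAt (fun u => |x| / √(θ ^ 2 + σ ^ 2) * Real.exp u)
      (|x| / √(θ ^ 2 + σ ^ 2) * Real.exp u) Set.univ u :=
    fun u _ => ((Real.hasDerivAt_exp u).const_mul _).hasDerivWithinAt
  have habs : ∀ u, |(|x| / √(θ ^ 2 + σ ^ 2) * Real.exp u)| = |x| / √(θ ^ 2 + σ ^ 2) * Real.exp u :=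
    fun u => abs_of_pos (by positivity)
  rw [integrable_gammaMeasure_iff (half_pos hr) (by norm_num), ← himg,
    integrableOn_image_iff_integrableOn_abs_deriv_smul MeasurableSet.univ hder hinj] at hint
  rw [integral_gammaMeasure (half_pos hr) (by norm_num), ← himg,
    integral_image_eq_integral_abs_deriv_smul MeasurableSet.univ hder hinj]
  simp only [habs, smul_eq_mul, jacobian_mul_density_eq hr hσ hx, integrableOn_univ,
    Measure.restrict_univ] at hint ⊢
  have hw : 0 < √(θ ^ 2 + σ ^ 2) := Real.sqrt_pos.2 (by positivity)
  have hx' : 0 < |x| := abs_pos.2 hx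
  have hC : IsUnit (1 / 2 * (1 / (σ * √Real.pi * Real.Gamma (r / 2)) * Real.exp (θ * x / σ ^ 2) *
      (|x| / (2 * √(θ ^ 2 + σ ^ 2))) ^ ((r - 1) / 2))) := by
    have : 0 < √Real.pi := Real.sqrt_pos.2 Real.pi_pos
    exact IsUnit.mk0 _ (by positivity)
  rw [integrable_const_mul_iff hC] at hint
  rw [integral_const_mul, integral_exp_sub_cosh hint, vgPDF]
  ring

lemma vgPDF_ae_eq {r θ σ : ℝ} (hr : 0 < r) (hσ : 0 < σ) :
    (fun x => ∫ s, vgKernel θ σ s x ∂(gammaMeasure (r / 2) (1 / 2))) =ᵐ[volume] vgPDF r θ σ := by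
  have := isProbabilityMeasure_gammaMeasure (half_pos hr) (one_half_pos (α := ℝ))
  have h := (integrable_vgKernel (half_pos hr) (one_half_pos (α := ℝ)) θ hσ).prod_left_ae
  filter_upwards [h, Measure.ae_ne volume (0 : ℝ)] with x hx hx0
  exact integral_vgKernel hr hσ hx0 hx

lemma integrable_vgPDF {r θ σ : ℝ} (hr : 0 < r) (hσ : 0 < σ) : Integrable (vgPDF r θ σ) := by
  have := isProbabilityMeasure_gammaMeasure (half_pos hr) (one_half_pos (α := ℝ))
  exact ((integrable_vgKernel (half_pos hr) (one_half_pos (α := ℝ)) θ hσ).integral_prod_right).congr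
    (vgPDF_ae_eq hr hσ)

/-- Conditioning on the mixing variable: the normal law with mean `θ s` and variance `σ² s` has
characteristic function `exp (s (i t θ - σ² t² / 2))`, whose gamma average is a value of the
complex moment generating function. -/
lemma charFun_vg {r θ σ : ℝ} (hr : 0 < r) (hσ : 0 < σ) (t : ℝ) :
    charFun ((volume : Measure ℝ).withDensity (fun x => ENNReal.ofReal (vgPDF r θ σ x))) t =
      complexMGF id (gammaMeasure (r / 2) (1 / 2))
        (t * θ * Complex.I - σ ^ 2 * t ^ 2 / 2) := by
  have hP := isProbabilityMeasure_gammaMeasure (half_pos hr) (one_half_pos (α := ℝ))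
  have hK := integrable_vgKernel (half_pos hr) (one_half_pos (α := ℝ)) θ hσ
  rw [charFun_apply_real, integral_withDensity_eq_integral_toReal_smul₀
    (integrable_vgPDF hr hσ).aestronglyMeasurable.aemeasurable.ennreal_ofReal
    (ae_of_all _ fun _ => ENNReal.ofReal_lt_top)]
  have hF : Integrable (Function.uncurry fun s x : ℝ =>
      vgKernel θ σ s x • Complex.exp (t * x * Complex.I))
      ((gammaMeasure (r / 2) (1 / 2)).prod volume) := by
    refine hK.mono ?_ (ae_of_all _ fun p => ?_)
    · refine hK.aestronglyMeasurable.smul (f := Function.uncurry (vgKernel θ σ))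
        (g := fun p : ℝ × ℝ => Complex.exp (t * p.2 * Complex.I)) ?_
      exact Continuous.aestronglyMeasurable (by fun_prop)
    · have : ‖Complex.exp (t * p.2 * Complex.I)‖ = 1 := by
        rw [← Complex.ofReal_mul]; exact Complex.norm_exp_ofReal_mul_I _
      simp [Function.uncurry, this]
  calc _ = ∫ x : ℝ, ∫ s, vgKernel θ σ s x • Complex.exp (t * x * Complex.I)
        ∂(gammaMeasure (r / 2) (1 / 2)) := by
        refine integral_congr_ae ?_
        filter_upwards [vgPDF_ae_eq (θ := θ) hr hσ] with x hx
        have h0 : 0 ≤ vgPDF r θ σ x := by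
          rw [← hx]; exact integral_nonneg fun s => gaussianPDFReal_nonneg _ _ _
        rw [integral_smul_const, hx, ENNReal.toReal_ofReal h0]
    _ = ∫ s, (∫ x : ℝ, vgKernel θ σ s x • Complex.exp (t * x * Complex.I))
        ∂(gammaMeasure (r / 2) (1 / 2)) := (integral_integral_swap hF).symm
    _ = _ := by
        refine integral_congr_ae ?_
        filter_upwards [gamma_ae_pos (r / 2) (1 / 2)] with s hs
        have hv : (σ ^ 2 * s).toNNReal ≠ 0 := by
          rw [ne_eq, Real.toNNReal_eq_zero, not_le]; positivity
        simp only [vgKernel]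
        rw [← integral_gaussianReal_eq_integral_smul hv, ← charFun_apply_real,
          charFun_gaussianReal]
        have hc : (((σ ^ 2 * s).toNNReal : ℝ) : ℂ) = σ ^ 2 * s := by
          rw [Real.coe_toNNReal _ (by positivity)]; push_cast; rfl
        rw [hc]
        congr 1
        push_cast [id]
        ring

/-- If `W₁ ~ VG(r₁, θ, σ, 0)` and `W₂ ~ VG(r₂, θ, σ, 0)` are independent, then
`W₁ + W₂ ~ VG(r₁ + r₂, θ, σ, 0)`. -/
theorem variance_gamma_add
    {Ω : Type*} [MeasurableSpace Ω] (μ : Measure Ω) [IsProbabilityMeasure μ]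
    (r₁ r₂ θ σ : ℝ) (hr₁ : 0 < r₁) (hr₂ : 0 < r₂) (hσ : 0 < σ)
    (W₁ W₂ : Ω → ℝ) (hW₁ : Measurable W₁) (hW₂ : Measurable W₂)
    (hindep : IndepFun W₁ W₂ μ)
    (hW₁law : Measure.map W₁ μ =
      (volume : Measure ℝ).withDensity (fun x => ENNReal.ofReal (vgPDF r₁ θ σ x)))
    (hW₂law : Measure.map W₂ μ =
      (volume : Measure ℝ).withDensity (fun x => ENNReal.ofReal (vgPDF r₂ θ σ x))) :
    Measure.map (fun ω => W₁ ω + W₂ ω) μ =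
      (volume : Measure ℝ).withDensity
        (fun x => ENNReal.ofReal (vgPDF (r₁ + r₂) θ σ x)) := by
  have hr := add_pos hr₁ hr₂
  have : IsFiniteMeasure ((volume : Measure ℝ).withDensity
      (fun x => ENNReal.ofReal (vgPDF (r₁ + r₂) θ σ x))) :=
    isFiniteMeasure_withDensity_ofReal (integrable_vgPDF hr hσ).hasFiniteIntegral
  refine Measure.ext_of_charFun (funext fun t => ?_)
  rw [hindep.charFun_map_fun_add_eq_mul hW₁.aemeasurable hW₂.aemeasurable, Pi.mul_apply, hW₁law,
    hW₂law, charFun_vg hr₁ hσ, charFun_vg hr₂ hσ, charFun_vg hr hσ, add_div]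
  refine complexMGF_gammaMeasure_mul (half_pos hr₁) (half_pos hr₂) one_half_pos ?_
  have hre : ((t : ℂ) * θ * Complex.I - σ ^ 2 * t ^ 2 / 2).re = -(σ ^ 2 * t ^ 2 / 2) := by
    have : (t : ℂ) * θ * Complex.I - σ ^ 2 * t ^ 2 / 2 =
        ((-(σ ^ 2 * t ^ 2 / 2) : ℝ) : ℂ) + ((t * θ : ℝ) : ℂ) * Complex.I := by
      push_cast; ring
    rw [this, Complex.add_re, Complex.ofReal_re, Complex.re_ofReal_mul, Complex.I_re, mul_zero,
      add_zero]
  rw [hre]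
  have : 0 ≤ σ ^ 2 * t ^ 2 := by positivity
  linarith
end
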